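/- arXiv:2402.09383 — 7 statements merged into one kernel-verified Lean document; each statement's English description precedes it below -/
import Mathlib

section
/- For any subgroup H of G, any two adjacent vertices of Γ_H(G) have exactly |G| - 2|H| + 2 common neighbours; that is, if u and v are adjacent vertices of Γ_H(G), then the number of vertices adjacent to both u and v equals |G| - 2|H| + 2. -/
/-!
Since `1 ∈ H`, the connection set `S` omits the identity, so `u` and `v` are adjacent iff
`d = u v⁻¹ ∈ S`. The substitution `x = u w⁻¹` turns the common neighbours `w` of `u` and `v` into
the `x ∈ S` with `d⁻¹ x ∈ S`. The set `S` lies in the union of three copies of `G` in `G × G`, the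
two factors and the diagonal, which meet pairwise trivially. Say `d` corresponds to `g ∉ H` in
one of the three copies. The solutions `x` in that same copy correspond to the `a ∈ G` outside
the disjoint cosets `H` and `gH`, which gives `|G| - 2|H|` of them; each of the two other copies
contains exactly one solution.
-/

open Pointwise

variable {G : Type*}

/-- The connection set `S = {(g,e),(e,g),(g,g) : g ∈ G \ H}` (as a predicate). -/
def inS [Group G] (H : Subgroup G) (p : G × G) : Prop :=
  (p.1 ∉ H ∧ p.2 = 1) ∨ (p.1 = 1 ∧ p.2 ∉ H) ∨ (p.1 = p.2 ∧ p.1 ∉ H)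

/-- Adjacency in the Cayley graph `Γ_H(G)` on `G × G`: distinct vertices
`(g₁,g₂)`, `(g₃,g₄)` are adjacent iff `(g₁g₃⁻¹, g₂g₄⁻¹) ∈ S`. -/
def gAdj [Group G] (H : Subgroup G) (u v : G × G) : Prop :=
  u ≠ v ∧ inS H (u.1 * v.1⁻¹, u.2 * v.2⁻¹)

/-- The set of common neighbours of `u` and `v` in `Γ_H(G)`. -/
def commonNbrs [Group G] (H : Subgroup G) (u v : G × G) : Set (G × G) :=
  {w | gAdj H u w ∧ gAdj H v w}

theorem gAdj_iff_inS [Group G] (H : Subgroup G) (u v : G × G) :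
    gAdj H u v ↔ inS H (u * v⁻¹) := by
  refine ⟨fun h => h.2, fun h => ⟨?_, h⟩⟩
  rintro rfl
  simp [inS, H.one_mem] at h

/-- The cosets `H` and `gH` are disjoint when `g ∉ H`, so their union has complement of size
`|G| - 2|H|`. -/
theorem ncard_avoid [Group G] [Finite G] (H : Subgroup G) {g : G} (hg : g ∉ H) :
    (({a | a ∉ H ∧ g⁻¹ * a ∉ H} : Set G).ncard : ℤ) = Nat.card G - 2 * Nat.card H := by
  have hset : ({a | a ∉ H ∧ g⁻¹ * a ∉ H} : Set G) = ((H : Set G) ∪ g • (H : Set G))ᶜ := by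
    ext a
    simp [Set.mem_smul_set_iff_inv_smul_mem]
  have hdisj : Disjoint (H : Set G) (g • (H : Set G)) := by
    rw [Set.disjoint_left]
    intro a ha hga
    rw [Set.mem_smul_set_iff_inv_smul_mem, smul_eq_mul, SetLike.mem_coe] at hga
    have := H.mul_mem ha (H.inv_mem hga)
    simp at this
    exact hg this
  have h₁ := Set.ncard_add_ncard_compl ((H : Set G) ∪ g • (H : Set G))
  rw [Set.ncard_union_eq hdisj, Set.ncard_smul_set, ← hset] at h₁
  have h₂ : (H : Set G).ncard = Nat.card H := rfl
  omega

/-- Counting for a solution set made of an injective copy of `{a | a ∉ H ∧ g⁻¹ a ∉ H}` and two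
further points. -/
theorem ncard_of_eq_image_union_pair [Group G] [Finite G] (H : Subgroup G) {g : G} (hg : g ∉ H)
    {T : Set (G × G)} (f : G → G × G) (hf : Function.Injective f) (p q : G × G) (hpq : p ≠ q)
    (hp : p ∉ Set.range f) (hq : q ∉ Set.range f)
    (hT : T = f '' {a | a ∉ H ∧ g⁻¹ * a ∉ H} ∪ {p, q}) :
    (T.ncard : ℤ) = (Nat.card G : ℤ) - 2 * (Nat.card H : ℤ) + 2 := by
  have hdisj : Disjoint (f '' {a | a ∉ H ∧ g⁻¹ * a ∉ H}) {p, q} := by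
    rw [Set.disjoint_left]
    rintro _ ⟨a, -, rfl⟩ (h | h)
    · exact hp ⟨a, h⟩
    · exact hq ⟨a, h⟩
  rw [hT, Set.ncard_union_eq hdisj, Set.ncard_image_of_injective _ hf, Set.ncard_pair hpq]
  push_cast
  rw [ncard_avoid H hg]

/-- The number of ways to write `d ∈ S` as `x y⁻¹` with `x, y ∈ S`. -/
theorem ncard_inS_inter [Group G] [Finite G] (H : Subgroup G) (d : G × G) (hd : inS H d) :
    (({x | inS H x ∧ inS H (d⁻¹ * x)} : Set (G × G)).ncard : ℤ)
      = (Nat.card G : ℤ) - 2 * (Nat.card H : ℤ) + 2 := by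
  obtain ⟨g, k⟩ := d
  have h1 : (1 : G) ∈ H := H.one_mem
  rcases hd with ⟨hg, hk⟩ | ⟨hk, hg⟩ | ⟨hk, hg⟩ <;> dsimp only at hg hk <;> subst hk
  · have hne : g ≠ 1 := fun h => hg (h ▸ h1)
    refine ncard_of_eq_image_union_pair H hg (fun a => (a, 1)) (fun a b h => by simpa using h)
      (1, g⁻¹) (g, g) (by simp [hne.symm]) (by simp [hne]) (by simp [hne.symm]) ?_
    ext ⟨a, b⟩
    simp only [inS, Set.mem_ofPred_eq, Set.mem_union, Set.mem_image, Set.mem_insert_iff,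
      Set.mem_singleton_iff, Prod.mk.injEq, Prod.inv_mk, Prod.mk_mul_mk, inv_one, one_mul,
      inv_mul_eq_one]
    -- The nine cases record which copies of `G` contain `x` and `d⁻¹ x`.
    constructor
    · rintro ⟨h | h | h, h' | h' | h'⟩ <;> grind [mul_eq_right, inv_eq_one]
    · rintro (⟨c, h, rfl, rfl⟩ | ⟨rfl, rfl⟩ | ⟨rfl, rfl⟩) <;> simp_all
  · have hne : k ≠ 1 := fun h => hg (h ▸ h1)
    refine ncard_of_eq_image_union_pair H hg (fun a => (1, a)) (fun a b h => by simpa using h)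
      (k⁻¹, 1) (k, k) (by simp [hne.symm]) (by simp [hne]) (by simp [hne.symm]) ?_
    ext ⟨a, b⟩
    simp only [inS, Set.mem_ofPred_eq, Set.mem_union, Set.mem_image, Set.mem_insert_iff,
      Set.mem_singleton_iff, Prod.mk.injEq, Prod.inv_mk, Prod.mk_mul_mk, inv_one, one_mul,
      inv_mul_eq_one]
    constructor
    · rintro ⟨h | h | h, h' | h' | h'⟩ <;> grind [mul_eq_right, inv_eq_one]
    · rintro (⟨c, h, rfl, rfl⟩ | ⟨rfl, rfl⟩ | ⟨rfl, rfl⟩) <;> simp_all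
  · have hne : g ≠ 1 := fun h => hg (h ▸ h1)
    refine ncard_of_eq_image_union_pair H hg (fun a => (a, a)) (fun a b h => by simpa using h)
      (g, 1) (1, g) (by simp [hne]) (by simp [hne]) (by simp [hne.symm]) ?_
    ext ⟨a, b⟩
    simp only [inS, Set.mem_ofPred_eq, Set.mem_union, Set.mem_image, Set.mem_insert_iff,
      Set.mem_singleton_iff, Prod.mk.injEq, Prod.inv_mk, Prod.mk_mul_mk,
      inv_mul_eq_one, mul_right_inj]
    constructor
    · rintro ⟨h | h | h, h' | h' | h'⟩ <;> grind [mul_eq_right, inv_eq_one]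
    · rintro (⟨c, h, rfl, rfl⟩ | ⟨rfl, rfl⟩ | ⟨rfl, rfl⟩) <;> simp_all

/-- For any subgroup `H` of `G`, any two adjacent vertices of `Γ_H(G)` have exactly
`|G| - 2|H| + 2` common neighbours. -/
theorem stmt_0 [Group G] [Fintype G] (hG : 5 ≤ Nat.card G) (H : Subgroup G)
    (u v : G × G) (huv : gAdj H u v) :
    ((commonNbrs H u v).ncard : ℤ) = (Nat.card G : ℤ) - 2 * (Nat.card H : ℤ) + 2 := by
  have hset : commonNbrs H u v
      = ((Equiv.inv (G × G)).trans (Equiv.mulLeft u)) ⁻¹'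
        {x | inS H x ∧ inS H ((u * v⁻¹)⁻¹ * x)} := by
    ext w
    have : (u * v⁻¹)⁻¹ * (u * w⁻¹) = v * w⁻¹ := by group
    simp only [commonNbrs, gAdj_iff_inS, Set.mem_ofPred_eq, Set.mem_preimage, Equiv.trans_apply,
      Equiv.inv_apply, Equiv.coe_mulLeft, this]
  rw [hset, Set.ncard_preimage_of_injective_subset_range (Equiv.injective _)
    (fun x _ => Equiv.surjective _ x)]
  exact ncard_inS_inter H _ ((gAdj_iff_inS H u v).1 huv)
end

section
/- Let H be a subgroup of G and let g₁, g₂ ∈ G \ H with g₁ ≠ g₂, g₁H = g₂H and Hg₁ = Hg₂. Then the vertices (e,e) and (g₁,g₂) of Γ_H(G) are non-adjacent and have exactly 2 common neighbours, namely (g₁,e) and (e,g₂). -/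
/-!
A vertex adjacent to `(e,e)` lies on one of three lines: `(x,e)`, `(e,y)`, `(x,x)`; likewise for
the differences with `(g₁,g₂)`. Intersecting a line through `(e,e)` with a non-parallel one through
`(g₁,g₂)` gives six candidates (parallel lines do not meet, as `g₁ ≠ e`, `g₂ ≠ e`, `g₁ ≠ g₂`).
Those involving a diagonal need `g₂⁻¹g₁`, `g₁⁻¹g₂` (excluded by `g₁H = g₂H`) or `g₁g₂⁻¹`, `g₂g₁⁻¹`
(excluded by `Hg₁ = Hg₂`) to be outside `H`, leaving only `(g₁,e)` and `(e,g₂)`.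
-/

open Pointwise

variable {G : Type*}

/-- The left coset `gH`. -/
def leftCoset' [Group G] (H : Subgroup G) (g : G) : Set G := {x | g⁻¹ * x ∈ H}

/-- The right coset `Hg`. -/
def rightCoset' [Group G] (H : Subgroup G) (g : G) : Set G := {x | x * g⁻¹ ∈ H}

/-- If `g₁, g₂ ∈ G \ H`, `g₁ ≠ g₂`, `g₁H = g₂H` and `Hg₁ = Hg₂`, then `(e,e)` and
`(g₁,g₂)` are non-adjacent and have exactly `2` common neighbours, namely `(g₁,e)`
and `(e,g₂)`. -/
theorem stmt_2 [Group G] [Fintype G] (hG : 5 ≤ Nat.card G) (H : Subgroup G)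
    (g₁ g₂ : G) (h₁ : g₁ ∉ H) (h₂ : g₂ ∉ H) (hne : g₁ ≠ g₂)
    (hL : leftCoset' H g₁ = leftCoset' H g₂) (hR : rightCoset' H g₁ = rightCoset' H g₂) :
    ¬ gAdj H (1, 1) (g₁, g₂) ∧
    commonNbrs H (1, 1) (g₁, g₂) = {(g₁, 1), (1, g₂)} ∧
    (commonNbrs H (1, 1) (g₁, g₂)).ncard = 2 := by
  have n1 : g₁ ≠ 1 := fun h => h₁ (h ▸ H.one_mem)
  have n2 : g₂ ≠ 1 := fun h => h₂ (h ▸ H.one_mem)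
  have a12 : g₁⁻¹ * g₂ ∈ H := by
    have : g₂ ∈ leftCoset' H g₂ := by simp [leftCoset', H.one_mem]
    rwa [← hL] at this
  have b21 : g₂ * g₁⁻¹ ∈ H := by
    have : g₂ ∈ rightCoset' H g₂ := by simp [rightCoset', H.one_mem]
    rwa [← hR] at this
  have a21 : g₂⁻¹ * g₁ ∈ H := by simpa using H.inv_mem a12
  have b12 : g₁ * g₂⁻¹ ∈ H := by simpa using H.inv_mem b21
  have hset : commonNbrs H (1, 1) (g₁, g₂) = {(g₁, 1), (1, g₂)} := by
    ext ⟨x, y⟩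
    simp only [commonNbrs, Set.mem_ofPred_eq, Set.mem_insert_iff, Set.mem_singleton_iff,
      Prod.mk.injEq]
    constructor
    · rintro ⟨⟨-, h⟩, -, k⟩
      simp only [inS, one_mul, H.inv_mem_iff, inv_eq_one, inv_inj, mul_inv_eq_one] at h k
      rcases h with ⟨hx, rfl⟩ | ⟨rfl, hy⟩ | ⟨rfl, hx⟩
      · rcases k with ⟨-, k⟩ | ⟨k, -⟩ | ⟨k, -⟩
        · exact absurd k n2
        · exact Or.inl ⟨k.symm, rfl⟩
        · -- the diagonal through `(g₁,g₂)` meets `y = e` at `x = g₂⁻¹g₁ ∈ H`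
          have : x = g₂⁻¹ * g₁ := by
            rw [inv_one, mul_one, mul_inv_eq_iff_eq_mul] at k
            rw [k, inv_mul_cancel_left]
          exact absurd (this ▸ a21) hx
      · rcases k with ⟨-, k⟩ | ⟨k, -⟩ | ⟨k, -⟩
        · exact Or.inr ⟨rfl, k.symm⟩
        · exact absurd k n1
        · have : y = g₁⁻¹ * g₂ := by
            rw [inv_one, mul_one, eq_mul_inv_iff_mul_eq] at k
            rw [← k, inv_mul_cancel_left]
          exact absurd (this ▸ a12) hy
      · rcases k with ⟨k, rfl⟩ | ⟨rfl, k⟩ | ⟨k, -⟩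
        · exact absurd b12 k
        · exact absurd b21 k
        · exact absurd (mul_right_cancel k) hne
    · rintro (⟨rfl, rfl⟩ | ⟨rfl, rfl⟩) <;>
        simp [gAdj, inS, h₁, h₂, n1, n2, n1.symm, n2.symm]
  refine ⟨?_, hset, ?_⟩
  · rintro ⟨-, h⟩
    simp [inS, n1, n2, hne] at h
  · rw [hset]
    exact Set.ncard_pair (by simp [n1])
end

section
/- Let H be a subgroup of G with |H| > 2, and let h₁, h₂ ∈ H \ {e} with h₁ ≠ h₂. Then the vertices (e,e) and (h₁,h₂) of Γ_H(G) are non-adjacent and have no common neighbour. -/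
/-!
Membership in `S` only depends on which of `x`, `y` lie in `H` and on whether `x = 1`, `y = 1`
or `x = y`. Left multiplication by an element of `H` preserves non-membership in `H`, so
`(x, y)` and `(h₁ * x, h₂ * y)` can both lie in `S` only if they have the same shape `(g, 1)`,
`(1, g)` or `(g, g)`, which forces `h₂ = 1`, `h₁ = 1` or `h₁ = h₂` respectively.
-/

open Pointwise

variable {G : Type*}

/-- Translating by `(h₁, h₂)` carries no element of `S` into `S`; a common neighbour `w` of
`(1, 1)` and `(h₁, h₂)` would give such an element, namely `w⁻¹`. -/
lemma not_inS_translate [Group G] (H : Subgroup G) {h₁ h₂ : G} (hm₁ : h₁ ∈ H) (hm₂ : h₂ ∈ H)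
    (hn₁ : h₁ ≠ 1) (hn₂ : h₂ ≠ 1) (hne : h₁ ≠ h₂) {x y : G} (hxy : inS H (x, y)) :
    ¬ inS H (h₁ * x, h₂ * y) := by
  have h1 := H.one_mem
  have e₁ : h₁ * x ∈ H ↔ x ∈ H := H.mul_mem_cancel_left hm₁
  have e₂ : h₂ * y ∈ H ↔ y ∈ H := H.mul_mem_cancel_left hm₂
  unfold inS at *
  rcases hxy with ⟨hx, hy⟩ | ⟨hx, hy⟩ | ⟨hx, hy⟩ <;>
    rintro (⟨ha, hb⟩ | ⟨ha, hb⟩ | ⟨ha, hb⟩) <;> simp_all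

/-- If `|H| > 2` and `h₁, h₂ ∈ H \ {e}` with `h₁ ≠ h₂`, then `(e,e)` and `(h₁,h₂)`
are non-adjacent and have no common neighbour. -/
theorem stmt_3 [Group G] [Fintype G] (hG : 5 ≤ Nat.card G) (H : Subgroup G)
    (hH : 2 < Nat.card H) (h₁ h₂ : G) (hm₁ : h₁ ∈ H) (hm₂ : h₂ ∈ H)
    (hn₁ : h₁ ≠ 1) (hn₂ : h₂ ≠ 1) (hne : h₁ ≠ h₂) :
    ¬ gAdj H (1, 1) (h₁, h₂) ∧ commonNbrs H (1, 1) (h₁, h₂) = ∅ := by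
  constructor
  -- Both coordinates of the difference lie in `H`, while every element of `S` has one outside.
  · rintro ⟨-, h⟩
    simp [inS, hm₁, hm₂] at h
  · ext ⟨a, b⟩
    simp only [commonNbrs, gAdj, Set.mem_ofPred_eq, Set.mem_empty_iff_false, iff_false]
    rintro ⟨⟨-, h⟩, -, h'⟩
    exact not_inS_translate H hm₁ hm₂ hn₁ hn₂ hne (by simpa using h) h'
end

section
/- Let H be a nontrivial proper subgroup of G with [G : H] > 2, and let g₁, g₂ ∈ G \ H with g₁H ≠ g₂H and Hg₁ ≠ Hg₂. Then the vertices (e,e) and (g₁,g₂) of Γ_H(G) are non-adjacent and have exactly 6 common neighbours. -/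
/-!
A neighbour of `(1, 1)` has the form `(a, 1)`, `(1, a)` or `(a, a)` with `a ∉ H`. In each case,
being adjacent to `(g₁, g₂)` leaves exactly two choices of `a`, because `g₁`, `g₂`, `1` are
distinct: `(a, 1)` forces `a = g₁` or `a = g₂⁻¹ g₁`, `(1, a)` forces `a = g₂` or `a = g₁⁻¹ g₂`,
and `(a, a)` forces `a = g₁` or `a = g₂`. The two coset conditions say that `g₁⁻¹ g₂ ∉ H` and
`g₁ g₂⁻¹ ∉ H`, which is what makes all six candidates common neighbours.
-/

open Pointwise

variable {G : Type*}

theorem inv_mul_notMem_of_leftCoset_ne [Group G] {H : Subgroup G} {g₁ g₂ : G}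
    (hL : leftCoset' H g₁ ≠ leftCoset' H g₂) : g₁⁻¹ * g₂ ∉ H := by
  intro h
  apply hL
  ext x
  have e : g₁⁻¹ * x = (g₁⁻¹ * g₂) * (g₂⁻¹ * x) := by group
  simp only [leftCoset', Set.mem_ofPred_eq, e, H.mul_mem_cancel_left h]

theorem mul_inv_notMem_of_rightCoset_ne [Group G] {H : Subgroup G} {g₁ g₂ : G}
    (hR : rightCoset' H g₁ ≠ rightCoset' H g₂) : g₁ * g₂⁻¹ ∉ H := by
  intro h
  apply hR
  ext x
  have e : x * g₂⁻¹ = (x * g₁⁻¹) * (g₁ * g₂⁻¹) := by group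
  simp only [rightCoset', Set.mem_ofPred_eq, e, H.mul_mem_cancel_right h]

theorem inS_inv_iff [Group G] (H : Subgroup G) (x y : G) : inS H (x⁻¹, y⁻¹) ↔ inS H (x, y) := by
  simp [inS]

theorem not_inS_one [Group G] (H : Subgroup G) : ¬ inS H ((1 : G), (1 : G)) := by
  simp [inS, H.one_mem]

/-- The condition `u ≠ v` in `gAdj` is redundant, since `(1, 1)` is not in the connection set. -/
theorem gAdj_iff [Group G] (H : Subgroup G) (u v : G × G) :
    gAdj H u v ↔ inS H (u.1 * v.1⁻¹, u.2 * v.2⁻¹) := by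
  refine ⟨fun h => h.2, fun h => ⟨?_, h⟩⟩
  rintro rfl
  simp only [mul_inv_cancel] at h
  exact not_inS_one H h

theorem gAdj_one_iff [Group G] (H : Subgroup G) (x y : G) :
    gAdj H (1, 1) (x, y) ↔ inS H (x, y) := by
  rw [gAdj_iff]
  simp only [one_mul]
  exact inS_inv_iff H x y

/-- If `H` is a nontrivial proper subgroup with `[G:H] > 2` and `g₁, g₂ ∈ G \ H` with
`g₁H ≠ g₂H` and `Hg₁ ≠ Hg₂`, then `(e,e)` and `(g₁,g₂)` are non-adjacent and have
exactly `6` common neighbours. -/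
theorem stmt_4 [Group G] [Fintype G] (hG : 5 ≤ Nat.card G) (H : Subgroup G)
    (hbot : H ≠ ⊥) (htop : H ≠ ⊤) (hidx : 2 < H.index)
    (g₁ g₂ : G) (h₁ : g₁ ∉ H) (h₂ : g₂ ∉ H)
    (hL : leftCoset' H g₁ ≠ leftCoset' H g₂) (hR : rightCoset' H g₁ ≠ rightCoset' H g₂) :
    ¬ gAdj H (1, 1) (g₁, g₂) ∧ (commonNbrs H (1, 1) (g₁, g₂)).ncard = 6 := by
  have n₁ : g₁ ≠ 1 := fun h => h₁ (h ▸ H.one_mem)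
  have n₂ : g₂ ≠ 1 := fun h => h₂ (h ▸ H.one_mem)
  have n₁₂ : g₁ ≠ g₂ := fun h => hL (by rw [h])
  have l₁₂ := inv_mul_notMem_of_leftCoset_ne hL
  have l₂₁ := inv_mul_notMem_of_leftCoset_ne hL.symm
  have r₁₂ := mul_inv_notMem_of_rightCoset_ne hR
  have r₂₁ := mul_inv_notMem_of_rightCoset_ne hR.symm
  refine ⟨?_, ?_⟩
  · rw [gAdj_one_iff]
    simp [inS, n₁, n₂, n₁₂]
  have key : commonNbrs H (1, 1) (g₁, g₂) =
      {(g₁, 1), (g₂⁻¹ * g₁, 1), (1, g₂), (1, g₁⁻¹ * g₂), (g₁, g₁), (g₂, g₂)} := by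
    ext ⟨x, y⟩
    simp only [commonNbrs, Set.mem_ofPred_eq, gAdj_one_iff]
    simp only [gAdj_iff, Set.mem_insert_iff,
      Set.mem_singleton_iff, Prod.mk.injEq]
    constructor
    · rintro ⟨⟨hx, rfl⟩ | ⟨rfl, hy⟩ | ⟨hxy, hx⟩, ⟨h, h'⟩ | ⟨h, h'⟩ | ⟨h, h'⟩⟩ <;>
        simp only [inv_one, mul_one] at *
      · exact absurd h' n₂
      · exact Or.inl ⟨(mul_inv_eq_one.mp h).symm, trivial⟩
      · refine Or.inr (Or.inl ⟨?_, trivial⟩)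
        rw [← h]; group
      · refine Or.inr (Or.inr (Or.inl ⟨trivial, (mul_inv_eq_one.mp h').symm⟩))
      · exact absurd h n₁
      · refine Or.inr (Or.inr (Or.inr (Or.inl ⟨trivial, ?_⟩)))
        rw [h]; group
      · subst hxy
        have := mul_inv_eq_one.mp h'
        simp [this]
      · subst hxy
        have := mul_inv_eq_one.mp h
        simp [this]
      · subst hxy
        exact absurd (mul_right_cancel h) n₁₂
    · rintro (⟨rfl, rfl⟩ | ⟨rfl, rfl⟩ | ⟨rfl, rfl⟩ | ⟨rfl, rfl⟩ | ⟨rfl, rfl⟩ | ⟨rfl, rfl⟩) <;>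
        simp [inS, *]
  rw [key]
  have a : g₁ ≠ g₂⁻¹ * g₁ := by simpa using n₂
  have b : g₂ ≠ g₁⁻¹ * g₂ := by simpa using n₁
  have c : g₂⁻¹ * g₁ ≠ 1 := fun h => l₂₁ (h ▸ H.one_mem)
  have d : g₁⁻¹ * g₂ ≠ 1 := fun h => l₁₂ (h ▸ H.one_mem)
  classical
  repeat rw [Set.ncard_insert_of_notMem (by
    simp only [Set.mem_insert_iff, Set.mem_singleton_iff, Prod.mk.injEq]
    grind)]
  rw [Set.ncard_singleton]
end

section
/- Let H be a nontrivial proper normal subgroup of G with [G : H] > 2 and |H| = 2. Then the set of numbers of common neighbours over all pairs of distinct non-adjacent vertices of Γ_H(G) equals {2, 6, |G| - |H|}. -/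
/-!
The number of common neighbours of `u` and `v` depends only on `x = u * v⁻¹`: it is the number of
`s ∈ S` with `x * s ∈ S` (`ncard_commonNbrs`, via `w ↦ v * w⁻¹`). Write `x = (a, b)`.

* If `x` lies on one of the three lines `(g, 1)`, `(1, g)`, `(g, g)` carrying `S`, then, as
  `x ≠ 1` and `x ∉ S`, its coordinates lie in `H`, so translation by `x` preserves the part of `S`
  on that line and moves the rest of `S` off `S`. This gives `|G| - |H|`.
* Otherwise two elements of `S` with quotient `x` lie on different lines, and each ordered pair of
  lines yields exactly one candidate for `s`. The six candidates come in three pairs,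
  one for each two of `a`, `b`, `a⁻¹ * b`; a pair of candidates is admissible iff the corresponding
  two elements lie outside `H` (`diffSet_generic`). As `|H| = 2`, at
  most one of these three elements lies in `H`, so the number is `6` if none does and `2` if one
  does.
-/

open Pointwise

variable {G : Type*}

/-- The `c`-set of `Γ_H(G)`: the set of all numbers of common neighbours of
pairs of distinct non-adjacent vertices. -/
def cSet [Group G] (H : Subgroup G) : Set ℕ :=
  {n | ∃ u v : G × G, u ≠ v ∧ ¬ gAdj H u v ∧ n = (commonNbrs H u v).ncard}

/-- The `s ∈ S` with `x * s ∈ S`, that is, the ways to write `x` as a quotient of two elements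
of the connection set. -/
def diffSet [Group G] (H : Subgroup G) (x : G × G) : Set (G × G) :=
  {s | inS H s ∧ inS H (x * s)}

theorem ncard_commonNbrs [Group G] (H : Subgroup G) (u v : G × G) :
    (commonNbrs H u v).ncard = (diffSet H (u * v⁻¹)).ncard := by
  -- Loops need no separate treatment: `1 ∉ S` because `1 ∈ H`.
  have key : ∀ p q : G × G, gAdj H p q ↔ inS H (p * q⁻¹) := by
    intro p q
    refine ⟨fun h => h.2, fun h => ⟨?_, h⟩⟩
    rintro rfl
    simp [inS, H.one_mem] at h
  have himg : diffSet H (u * v⁻¹) = (fun w => v * w⁻¹) '' commonNbrs H u v := by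
    ext s
    constructor
    · rintro ⟨h1, h2⟩
      refine ⟨s⁻¹ * v, ⟨(key _ _).2 ?_, (key _ _).2 ?_⟩, ?_⟩
      · simpa [mul_assoc] using h2
      · simpa using h1
      · simp
    · rintro ⟨w, ⟨h1, h2⟩, rfl⟩
      refine ⟨(key _ _).1 h2, ?_⟩
      simpa [mul_assoc] using (key _ _).1 h1
  rw [himg, Set.ncard_image_of_injective]
  intro w w' h
  simpa using h

theorem cSet_eq [Group G] (H : Subgroup G) :
    cSet H = {n | ∃ x : G × G, x ≠ 1 ∧ ¬ inS H x ∧ n = (diffSet H x).ncard} := by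
  ext n
  constructor
  · rintro ⟨u, v, huv, hadj, rfl⟩
    exact ⟨u * v⁻¹, fun h => huv (mul_inv_eq_one.1 h), fun h => hadj ⟨huv, h⟩,
      ncard_commonNbrs H u v⟩
  · rintro ⟨x, hx, hS, rfl⟩
    refine ⟨x, 1, hx, fun h => hS ?_, ?_⟩
    · simpa using h.2
    · simp [ncard_commonNbrs]

theorem diffSet_left [Group G] (H : Subgroup G) {z : G} (hz : z ∈ H) (hz1 : z ≠ 1) :
    diffSet H (z, 1) = (fun g => (g, 1)) '' (H : Set G)ᶜ := by
  ext ⟨p, q⟩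
  simp only [diffSet, inS, Set.mem_ofPred_eq, Set.mem_image, Set.mem_compl_iff, SetLike.mem_coe,
    Prod.mk_mul_mk, one_mul, Prod.mk.injEq, H.mul_mem_cancel_left hz]
  have := H.one_mem
  have : ∀ p : G, z * p ≠ p := by simpa using hz1
  have hinv : ∀ p : G, z * p = 1 → p ∈ H := fun p h => by
    rw [eq_inv_of_mul_eq_one_right h]; exact H.inv_mem hz
  grind

theorem diffSet_right [Group G] (H : Subgroup G) {z : G} (hz : z ∈ H) (hz1 : z ≠ 1) :
    diffSet H (1, z) = (fun g => (1, g)) '' (H : Set G)ᶜ := by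
  ext ⟨p, q⟩
  simp only [diffSet, inS, Set.mem_ofPred_eq, Set.mem_image, Set.mem_compl_iff, SetLike.mem_coe,
    Prod.mk_mul_mk, one_mul, Prod.mk.injEq, H.mul_mem_cancel_left hz]
  have := H.one_mem
  have : ∀ p : G, z * p ≠ p := by simpa using hz1
  have hinv : ∀ p : G, z * p = 1 → p ∈ H := fun p h => by
    rw [eq_inv_of_mul_eq_one_right h]; exact H.inv_mem hz
  grind

theorem diffSet_diag [Group G] (H : Subgroup G) {z : G} (hz : z ∈ H) (hz1 : z ≠ 1) :
    diffSet H (z, z) = (fun g => (g, g)) '' (H : Set G)ᶜ := by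
  ext ⟨p, q⟩
  simp only [diffSet, inS, Set.mem_ofPred_eq, Set.mem_image, Set.mem_compl_iff, SetLike.mem_coe,
    Prod.mk_mul_mk, Prod.mk.injEq, mul_right_inj, H.mul_mem_cancel_left hz]
  have := H.one_mem
  have : z * 1 = z := mul_one z
  grind

theorem ncard_image_compl [Group G] [Fintype G] (H : Subgroup G) {f : G → G × G}
    (hf : Function.Injective f) :
    (f '' (H : Set G)ᶜ).ncard = Nat.card G - Nat.card H := by
  rw [Set.ncard_image_of_injective _ hf, Set.ncard_compl]
  rfl

/-- Off the three lines, the six candidates for `s`, grouped by the condition that makes them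
admissible. -/
theorem diffSet_generic [Group G] (H : Subgroup G) [hn : H.Normal] {a b : G} (ha : a ≠ 1)
    (hb : b ≠ 1) (hab : a ≠ b) (s : G × G) :
    s ∈ diffSet H (a, b) ↔
      (a ∉ H ∧ b ∉ H ∧ (s = (a⁻¹, 1) ∨ s = (1, b⁻¹))) ∨
      (b ∉ H ∧ a⁻¹ * b ∉ H ∧ (s = (a⁻¹ * b, 1) ∨ s = (b⁻¹, b⁻¹))) ∨
      (a ∉ H ∧ a⁻¹ * b ∉ H ∧ (s = (1, b⁻¹ * a) ∨ s = (a⁻¹, a⁻¹))) := by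
  have e1 : a * b⁻¹ ∈ H ↔ a⁻¹ * b ∈ H := by
    rw [← H.inv_mem_iff, mul_inv_rev, inv_inv, hn.mem_comm_iff]
  have e2 : b * a⁻¹ ∈ H ↔ a⁻¹ * b ∈ H := hn.mem_comm_iff
  have e3 : b⁻¹ * a ∈ H ↔ a⁻¹ * b ∈ H := by
    rw [← H.inv_mem_iff, mul_inv_rev, inv_inv]
  have h1 := H.one_mem
  obtain ⟨p, q⟩ := s
  simp only [diffSet, inS, Set.mem_ofPred_eq, Prod.mk_mul_mk, Prod.mk.injEq]
  constructor
  · rintro ⟨⟨hp, rfl⟩ | ⟨rfl, hq⟩ | ⟨rfl, hp⟩, h⟩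
    · rw [mul_one] at h
      rcases h with ⟨_, h⟩ | ⟨h, h'⟩ | ⟨h, h'⟩
      · exact absurd h hb
      · obtain rfl := eq_inv_of_mul_eq_one_right h
        simp_all
      · obtain rfl : p = a⁻¹ * b := by rw [← h]; simp
        simp_all
    · rw [mul_one] at h
      rcases h with ⟨h', h⟩ | ⟨h, h'⟩ | ⟨h, h'⟩
      · obtain rfl := eq_inv_of_mul_eq_one_right h
        simp_all
      · exact absurd h ha
      · obtain rfl : q = b⁻¹ * a := by rw [h]; simp
        exact Or.inr (Or.inr ⟨h', fun h => hq (e3.2 h), Or.inl ⟨rfl, rfl⟩⟩)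
    · rcases h with ⟨h', h⟩ | ⟨h, h'⟩ | ⟨h, h'⟩
      · obtain rfl := eq_inv_of_mul_eq_one_right h
        simp_all
      · obtain rfl := eq_inv_of_mul_eq_one_right h
        simp_all
      · exact absurd (mul_right_cancel h) hab
  · rintro (⟨h, h', ⟨rfl, rfl⟩ | ⟨rfl, rfl⟩⟩ | ⟨h, h', ⟨rfl, rfl⟩ | ⟨rfl, rfl⟩⟩ |
      ⟨h, h', ⟨rfl, rfl⟩ | ⟨rfl, rfl⟩⟩) <;> simp_all

theorem ncard_six [Group G] [Fintype G] (H : Subgroup G) [H.Normal] {a b : G} (ha : a ∉ H)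
    (hb : b ∉ H) (hab : a⁻¹ * b ∉ H) : (diffSet H (a, b)).ncard = 6 := by
  have h1 := H.one_mem
  have ha1 : a ≠ 1 := by rintro rfl; exact ha h1
  have hb1 : b ≠ 1 := by rintro rfl; exact hb h1
  have hne : a ≠ b := by rintro rfl; simp [h1] at hab
  have hba : b⁻¹ * a ≠ 1 := fun h => hne (inv_mul_eq_one.1 h).symm
  have hab' : a⁻¹ * b ≠ 1 := fun h => hne (inv_mul_eq_one.1 h)
  have : diffSet H (a, b) = {(a⁻¹, 1), (1, b⁻¹), (a⁻¹ * b, 1), (b⁻¹, b⁻¹), (1, b⁻¹ * a),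
      (a⁻¹, a⁻¹)} := by
    ext s
    rw [diffSet_generic H ha1 hb1 hne]
    simp [ha, hb, hab, or_assoc]
  rw [this, Set.ncard_insert_of_notMem, Set.ncard_insert_of_notMem, Set.ncard_insert_of_notMem,
    Set.ncard_insert_of_notMem, Set.ncard_pair] <;>
    simp_all [eq_comm]

theorem ncard_two [Group G] [Fintype G] (H : Subgroup G) [H.Normal] {a b : G} (ha : a ≠ 1)
    (hb : b ≠ 1) (hne : a ≠ b)
    (h : (a ∈ H ∧ b ∉ H) ∨ (a ∉ H ∧ b ∈ H) ∨ (a ∉ H ∧ b ∉ H ∧ a⁻¹ * b ∈ H)) :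
    (diffSet H (a, b)).ncard = 2 := by
  rw [Set.ncard_eq_two]
  rcases h with ⟨h, h'⟩ | ⟨h, h'⟩ | ⟨h, h', h''⟩
  · have : a⁻¹ * b ∉ H := by rwa [H.mul_mem_cancel_left (H.inv_mem h)]
    refine ⟨(a⁻¹ * b, 1), (b⁻¹, b⁻¹), by simp [hb, eq_comm], ?_⟩
    ext s
    rw [diffSet_generic H ha hb hne]
    simp [*]
  · have : a⁻¹ * b ∉ H := by rwa [H.mul_mem_cancel_right h', H.inv_mem_iff]
    refine ⟨(1, b⁻¹ * a), (a⁻¹, a⁻¹), by simp [ha, eq_comm], ?_⟩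
    ext s
    rw [diffSet_generic H ha hb hne]
    simp [*]
  · refine ⟨(a⁻¹, 1), (1, b⁻¹), by simp [ha], ?_⟩
    ext s
    rw [diffSet_generic H ha hb hne]
    simp [*]

/-- If `[G : H] > 2`, two elements can be chosen in distinct nontrivial cosets of `H`. -/
theorem exists_two_cosets [Group G] (H : Subgroup G) (hidx : 2 < H.index) :
    ∃ a b : G, a ∉ H ∧ b ∉ H ∧ a⁻¹ * b ∉ H := by
  by_contra! hcon
  have htop : H ≠ ⊤ := by rintro rfl; simp at hidx
  obtain ⟨a, ha⟩ : ∃ a, a ∉ H := by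
    by_contra! h
    exact htop ((Subgroup.eq_top_iff' H).2 h)
  have : H.index = 2 := by
    refine Subgroup.index_eq_two_iff.2 ⟨a, fun b => ?_⟩
    have h1 : ∀ b, b ∉ H → b⁻¹ ∉ H := fun b hb h => hb (H.inv_mem_iff.1 h)
    by_cases hb : b ∈ H
    · refine Or.inr ⟨hb, fun h => ha ((H.mul_mem_cancel_left hb).1 h)⟩
    · refine Or.inl ⟨?_, hb⟩
      have := hcon b⁻¹ a (h1 b hb) ha
      simpa using this
  omega

/-- If `H` is a nontrivial proper normal subgroup of `G` with `[G:H] > 2` and `|H| = 2`,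
then the `c`-set of `Γ_H(G)` equals `{2, 6, |G| - |H|}`. -/
theorem stmt_7 [Group G] [Fintype G] (hG : 5 ≤ Nat.card G) (H : Subgroup G)
    (hbot : H ≠ ⊥) (htop : H ≠ ⊤) (hnorm : H.Normal) (hidx : 2 < H.index)
    (hcard : Nat.card H = 2) :
    cSet H = {2, 6, Nat.card G - Nat.card H} := by
  obtain ⟨⟨z, hz⟩, hzne⟩ := Subgroup.ne_bot_iff_exists_ne_one.1 hbot
  have hz1 : z ≠ 1 := fun h => hzne (Subtype.ext h)
  -- `H = {1, z}`.
  have hH : ∀ c ∈ H, c ≠ 1 → c = z := by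
    intro c hc hc1
    obtain ⟨y, hy, hu⟩ := (Nat.card_eq_two_iff' (1 : H)).1 hcard
    have h1 := hu ⟨c, hc⟩ (fun h => hc1 (congrArg Subtype.val h))
    have h2 := hu ⟨z, hz⟩ hzne
    exact congrArg Subtype.val (h1.trans h2.symm)
  rw [cSet_eq]
  ext n
  simp only [Set.mem_ofPred_eq, Set.mem_insert_iff, Set.mem_singleton_iff]
  constructor
  · rintro ⟨⟨a, b⟩, hx, hS, rfl⟩
    simp only [inS, not_or, not_and, not_not] at hS
    obtain ⟨hS1, hS2, hS3⟩ := hS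
    by_cases hb : b = 1
    · subst hb
      have ha : a ≠ 1 := fun h => hx (by rw [h]; rfl)
      have haH : a ∈ H := by by_contra h; exact hS1 h rfl
      rw [diffSet_left H haH ha, ncard_image_compl H (fun _ _ h => (Prod.ext_iff.1 h).1)]
      simp
    by_cases ha : a = 1
    · subst ha
      rw [diffSet_right H (hS2 rfl) hb, ncard_image_compl H (fun _ _ h => (Prod.ext_iff.1 h).2)]
      simp
    by_cases hab : a = b
    · subst hab
      rw [diffSet_diag H (hS3 rfl) ha, ncard_image_compl H (fun _ _ h => (Prod.ext_iff.1 h).1)]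
      simp
    have hnot : ¬ (a ∈ H ∧ b ∈ H) := fun h => hab ((hH a h.1 ha).trans (hH b h.2 hb).symm)
    by_cases h6 : a ∉ H ∧ b ∉ H ∧ a⁻¹ * b ∉ H
    · exact Or.inr (Or.inl (ncard_six H h6.1 h6.2.1 h6.2.2))
    · exact Or.inl (ncard_two H ha hb hab (by tauto))
  · obtain ⟨a, b, ha, hb, hab⟩ := exists_two_cosets H hidx
    have h1 := H.one_mem
    have ha1 : a ≠ 1 := by rintro rfl; exact ha h1
    have hb1 : b ≠ 1 := by rintro rfl; exact hb h1
    rintro (rfl | rfl | rfl)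
    · have hzb : z ≠ b := fun h => hb (h ▸ hz)
      refine ⟨(z, b), by simp [Prod.ext_iff, hb1], by simp [inS, hb1, hz1, hzb], ?_⟩
      exact (ncard_two H hz1 hb1 hzb (Or.inl ⟨hz, hb⟩)).symm
    · have hne : a ≠ b := by rintro rfl; simp [h1] at hab
      refine ⟨(a, b), by simp [Prod.ext_iff, hb1], by simp [inS, hb1, ha1, hne], ?_⟩
      exact (ncard_six H ha hb hab).symm
    · refine ⟨(z, 1), by simpa [Prod.ext_iff] using hz1, by simp [inS, hz, h1], ?_⟩
      rw [diffSet_left H hz hz1, ncard_image_compl H (fun _ _ h => (Prod.ext_iff.1 h).1)]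
end

section
/- If H is a normal subgroup of G, then the map α : G × G → G × G defined by α(x,y) = (y⁻¹, y⁻¹x) is a graph automorphism of Γ_H(G) satisfying α∘α∘α = id; that is, α is a bijection, (x₁,y₁) is adjacent to (x₂,y₂) in Γ_H(G) if and only if α(x₁,y₁) is adjacent to α(x₂,y₂), and α has order 3. -/
/-! The identity `α³ = id` is a direct computation, and it makes `α` bijective with inverse `α²`.
By `inS_alphaMap`, `α` permutes the three types of edges cyclically, so it preserves adjacency;
the converse follows by applying `α` twice more. Finally, `α` moves `(x, e)` to `(e, x)`, so it is
not the identity when `G` is nontrivial. -/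

open Pointwise

variable {G : Type*}

/-- The map `α(x,y) = (y⁻¹, y⁻¹x)` on `G × G`. -/
def alphaMap [Group G] : G × G → G × G := fun p => (p.2⁻¹, p.2⁻¹ * p.1)

/-- Preservation of the connection set under `α`: if `(a c⁻¹, b d⁻¹) ∈ S` then the quotient of
the images, `(b⁻¹d, b⁻¹(a c⁻¹)d)`, lies in `S`. The types `(g,e)`, `(e,g)`, `(g,g)` are sent to
`(e,g)`, `(g,g)`, `(g,e)` respectively; normality of `H` keeps the conjugates outside `H`. -/
theorem inS_alphaMap [Group G] (H : Subgroup G) (hnorm : H.Normal) (u v : G × G)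
    (h : inS H (u.1 * v.1⁻¹, u.2 * v.2⁻¹)) :
    inS H ((alphaMap u).1 * (alphaMap v).1⁻¹, (alphaMap u).2 * (alphaMap v).2⁻¹) := by
  obtain ⟨a, b⟩ := u
  obtain ⟨c, d⟩ := v
  have key : b⁻¹ * d ∈ H → b * d⁻¹ ∈ H := fun hm => by
    have h2 := H.inv_mem (hnorm.mem_comm hm)
    simpa using h2
  simp only [inS, alphaMap] at h ⊢
  rcases h with ⟨h1, h2⟩ | ⟨h1, h2⟩ | ⟨h1, h2⟩
  · obtain rfl : b = d := mul_inv_eq_one.mp h2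
    refine Or.inr (Or.inl ⟨by group, fun hm => h1 ?_⟩)
    have h3 := hnorm.conj_mem _ hm b
    convert h3 using 1
    group
  · obtain rfl : a = c := mul_inv_eq_one.mp h1
    exact Or.inr (Or.inr ⟨by group, fun hm => h2 (key (by simpa using hm))⟩)
  · refine Or.inl ⟨fun hm => h2 ?_, ?_⟩
    · rw [h1]
      exact key (by simpa using hm)
    · calc b⁻¹ * a * (d⁻¹ * c)⁻¹ = b⁻¹ * (a * c⁻¹) * d := by group
        _ = 1 := by rw [h1]; group

theorem alphaMap_cube [Group G] (p : G × G) : alphaMap (alphaMap (alphaMap p)) = p := by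
  simp [alphaMap]

theorem alphaMap_injective [Group G] : Function.Injective (alphaMap (G := G)) := fun p q h => by
  rw [← alphaMap_cube p, h, alphaMap_cube]

theorem gAdj_alphaMap [Group G] (H : Subgroup G) (hnorm : H.Normal) (u v : G × G)
    (h : gAdj H u v) : gAdj H (alphaMap u) (alphaMap v) :=
  ⟨fun he => h.1 (alphaMap_injective he), inS_alphaMap H hnorm u v h.2⟩

/-- If `H` is normal in `G`, then `α(x,y) = (y⁻¹, y⁻¹x)` is a graph automorphism of
`Γ_H(G)` of order `3`. -/
theorem stmt_14 [Group G] [Fintype G] (hG : 5 ≤ Nat.card G) (H : Subgroup G)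
    (hnorm : H.Normal) :
    Function.Bijective (alphaMap (G := G)) ∧
    (∀ u v : G × G, gAdj H u v ↔ gAdj H (alphaMap u) (alphaMap v)) ∧
    alphaMap (G := G) ∘ alphaMap ∘ alphaMap = id ∧
    alphaMap (G := G) ≠ id := by
  refine ⟨⟨alphaMap_injective, fun p => ⟨alphaMap (alphaMap p), alphaMap_cube p⟩⟩,
    fun u v => ⟨gAdj_alphaMap H hnorm u v, fun h => ?_⟩, funext alphaMap_cube, fun h => ?_⟩
  · have h3 := gAdj_alphaMap H hnorm _ _ (gAdj_alphaMap H hnorm _ _ h)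
    rwa [alphaMap_cube, alphaMap_cube] at h3
  · have : Nontrivial G := Finite.one_lt_card_iff_nontrivial.mp (by omega)
    obtain ⟨x, hx⟩ := exists_ne (1 : G)
    have h1 := congrArg Prod.fst (congrFun h (x, 1))
    exact hx (by simpa [alphaMap] using h1.symm)
end

section
/- Let H be a nontrivial proper subgroup of G and let φ be a graph automorphism of Γ_H(G) fixing the vertex (e,e) and satisfying φ(C₁) = C₁, φ(C₂) = C₂ and φ(C₃) = C₃, where C₁ = {(g,e) : g ∈ G, g ≠ e}, C₂ = {(e,g) : g ∈ G, g ≠ e} and C₃ = {(g,g) : g ∈ G, g ≠ e}. Then there exists a group automorphism f of G with f(H) = H such that φ(x,y) = (f(x), f(y)) for all x, y ∈ G. -/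
/-!
Write `K = G \ H`, and let `f₁, f₂, f₃ : G → G` be the maps that `φ` induces on the three lines
`{(g,e)}`, `{(e,g)}`, `{(g,g)}`.  A vertex `(x, y)` with `y ∈ K` has exactly the two neighbours
`(x, e)`, `(y⁻¹x, e)` on the first line, one with `x ∈ K` has exactly `(e, y)`, `(e, x⁻¹y)` on the
second, and one with `xy⁻¹ ∈ K` has exactly `(x, x)`, `(y, y)` on the third, while a vertex off a
line and outside the corresponding class has no neighbour on it.  So if `φ (x, y) = (x', y')`,

* `{x', y'⁻¹x'} = {f₁ x, f₁ (y⁻¹x)}` when `y ∈ K`,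
* `{y', x'⁻¹y'} = {f₂ y, f₂ (x⁻¹y)}` when `x ∈ K`,
* `{x', y'} = {f₃ x, f₃ y}` when `xy⁻¹ ∈ K`

(`pair_one`, `pair_two`, `pair_three`).  On the vertices `(k, k)` and `(e, k)`, `k ∈ K`, these
relations give `f₁ = f₂ = f₃` on `K` and compatibility with inverses there; on the vertices `(h, k)`
and `(k, h)` with `h ∈ H`, `k ∈ K` they give `f₁ = f₂ = f₃ =: f` on `H`, the identity
`φ (x, y) = (f x, f y)` and `f (kh) = f k * f h`.  For `x, y ∈ K` with `x ≠ y, y⁻¹` the first two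
relations leave only `φ (x, y) = (f x, f y)` and `f (y⁻¹x) = (f y)⁻¹ * f x`.  This makes `f` a
homomorphism (`map_mul_of_partial`); the missing squares `k * k` come from
`f (k * (kh)) = f k * f (kh)` for some `e ≠ h ∈ H`.

Two kinds of vertices remain.  The relations determine `φ (x, x⁻¹)`, `x ∈ K`, except for a possible
swap with `(x⁻¹, x)` when `x³ = e`, which is excluded by the neighbour `(x, h)` of `(x, x⁻¹)`.  A
vertex of `H × H` goes to `H × H` by bijectivity, and is determined there by its neighbours `(k, y)`
and `(x, k)` with `k ∈ K`.
-/

open Pointwise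

variable {G : Type*}

section Helpers

variable [Group G] {H : Subgroup G}

lemma mem_of_eq {a b : G} (e : a = b) (hb : b ∈ H) : a ∈ H := e ▸ hb

lemma not_mem_ne_one {x : G} (h : x ∉ H) : x ≠ 1 := fun e => h (e ▸ H.one_mem)

/-! ### Neighbours on the three lines through the identity -/

lemma adj_one_iff {x y t : G} (hy : y ∉ H) :
    gAdj H (x, y) (t, 1) ↔ t = x ∨ t = y⁻¹ * x := by
  have hy1 := not_mem_ne_one hy
  simp only [gAdj, inS, ne_eq, Prod.mk.injEq, inv_one, mul_one, hy1, and_false, not_false_eq_true,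
    true_and, hy]
  constructor
  · rintro (h | h | h)
    · exact h.elim
    · exact Or.inl (mul_inv_eq_one.mp h.1).symm
    · right; rw [← h.1]; group
  · rintro (rfl | rfl)
    · exact Or.inr (Or.inl ⟨mul_inv_cancel t, trivial⟩)
    · right; right
      have e : x * (y⁻¹ * x)⁻¹ = y := by group
      exact ⟨e, e.symm ▸ hy⟩

lemma adj_two_iff {x y t : G} (hx : x ∉ H) :
    gAdj H (x, y) (1, t) ↔ t = y ∨ t = x⁻¹ * y := by
  have hx1 := not_mem_ne_one hx
  simp only [gAdj, inS, ne_eq, Prod.mk.injEq, inv_one, mul_one, hx1, false_and, not_false_eq_true,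
    true_and, hx, and_true, false_or]
  constructor
  · rintro (h | h)
    · exact Or.inl (mul_inv_eq_one.mp h).symm
    · right; rw [h]; group
  · rintro (rfl | rfl)
    · left; group
    · right; group

lemma adj_three_iff {x y t : G} (h : x * y⁻¹ ∉ H) :
    gAdj H (x, y) (t, t) ↔ t = x ∨ t = y := by
  have hxy : x ≠ y := fun e => h (by simp [e])
  have h' : y * x⁻¹ ∉ H := fun e => h (by simpa using H.inv_mem e)
  simp only [gAdj, inS, ne_eq, Prod.mk.injEq, mul_left_inj, hxy, false_and, or_false]
  constructor
  · rintro ⟨-, ⟨-, h⟩ | ⟨h, -⟩⟩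
    · exact Or.inr (mul_inv_eq_one.mp h).symm
    · exact Or.inl (mul_inv_eq_one.mp h).symm
  · rintro (rfl | rfl)
    · exact ⟨fun e => hxy e.2.symm, Or.inr ⟨by group, h'⟩⟩
    · exact ⟨fun e => hxy e.1, Or.inl ⟨h, by group⟩⟩

lemma not_mem_of_adj_one {x y t : G} (hy : y ≠ 1) (h : gAdj H (x, y) (t, 1)) : y ∉ H := by
  simp only [gAdj, inS, ne_eq, inv_one, mul_one] at h
  rcases h.2 with h | h | h
  · exact absurd h.2 hy
  · exact h.2
  · exact h.1 ▸ h.2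

lemma not_mem_of_adj_two {x y t : G} (hx : x ≠ 1) (h : gAdj H (x, y) (1, t)) : x ∉ H := by
  simp only [gAdj, inS, ne_eq, inv_one, mul_one] at h
  rcases h.2 with h | h | h
  · exact h.1
  · exact absurd h.1 hx
  · exact h.2

lemma not_mem_of_adj_three {x y t : G} (hxy : x ≠ y) (h : gAdj H (x, y) (t, t)) :
    x * y⁻¹ ∉ H := by
  simp only [gAdj, inS, ne_eq] at h
  rcases h.2 with h | h | h
  · rw [← mul_inv_eq_one.mp h.2] at h; exact h.1
  · rw [← mul_inv_eq_one.mp h.1] at h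
    exact fun e => h.2 (by simpa using H.inv_mem e)
  · exact absurd (mul_right_cancel h.1) hxy

/-! ### The action of an automorphism on the neighbours -/

omit [Group G] in
/-- Two distinct elements of `{p, q}` are `p` and `q` in some order. -/
lemma pair_cases {a b p q : G} (hab : a ≠ b) (ha : a = p ∨ a = q) (hb : b = p ∨ b = q) :
    (p = a ∧ q = b) ∨ (p = b ∧ q = a) := by
  grind

variable {φ : Equiv.Perm (G × G)} (hφ : ∀ u v : G × G, gAdj H u v ↔ gAdj H (φ u) (φ v))
include hφ

lemma pair_one {f : G → G} (hf : Function.Injective f) (h1 : ∀ x, φ (x, 1) = (f x, 1))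
    (hs : ∀ u, (φ u).2 = 1 → u.2 = 1) {x y : G} (hy : y ∉ H) :
    (φ (x, y)).2 ∉ H ∧
    (((φ (x, y)).1 = f x ∧ (φ (x, y)).2⁻¹ * (φ (x, y)).1 = f (y⁻¹ * x)) ∨
      ((φ (x, y)).1 = f (y⁻¹ * x) ∧ (φ (x, y)).2⁻¹ * (φ (x, y)).1 = f x)) := by
  have e1 := (hφ _ _).1 ((adj_one_iff (x := x) (t := x) hy).2 (Or.inl rfl))
  have e2 := (hφ _ _).1 ((adj_one_iff (x := x) (t := y⁻¹ * x) hy).2 (Or.inr rfl))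
  have hy1 := not_mem_ne_one hy
  have hne : (φ (x, y)).2 ≠ 1 := fun e => hy1 (hs _ e)
  rw [h1] at e1 e2
  have hm := not_mem_of_adj_one hne e1
  refine ⟨hm, pair_cases ?_ ((adj_one_iff hm).1 e1) ((adj_one_iff hm).1 e2)⟩
  intro e
  have := hf e
  exact hy1 (by simpa using this.symm)

lemma pair_two {f : G → G} (hf : Function.Injective f) (h1 : ∀ x, φ (1, x) = (1, f x))
    (hs : ∀ u, (φ u).1 = 1 → u.1 = 1) {x y : G} (hx : x ∉ H) :
    (φ (x, y)).1 ∉ H ∧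
    (((φ (x, y)).2 = f y ∧ (φ (x, y)).1⁻¹ * (φ (x, y)).2 = f (x⁻¹ * y)) ∨
      ((φ (x, y)).2 = f (x⁻¹ * y) ∧ (φ (x, y)).1⁻¹ * (φ (x, y)).2 = f y)) := by
  have e1 := (hφ _ _).1 ((adj_two_iff (y := y) (t := y) hx).2 (Or.inl rfl))
  have e2 := (hφ _ _).1 ((adj_two_iff (y := y) (t := x⁻¹ * y) hx).2 (Or.inr rfl))
  have hx1 := not_mem_ne_one hx
  have hne : (φ (x, y)).1 ≠ 1 := fun e => hx1 (hs _ e)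
  rw [h1] at e1 e2
  have hm := not_mem_of_adj_two hne e1
  refine ⟨hm, pair_cases ?_ ((adj_two_iff hm).1 e1) ((adj_two_iff hm).1 e2)⟩
  intro e
  have := hf e
  exact hx1 (by simpa using this.symm)

lemma pair_three {f : G → G} (hf : Function.Injective f) (h1 : ∀ x, φ (x, x) = (f x, f x))
    (hs : ∀ u, (φ u).1 = (φ u).2 → u.1 = u.2) {x y : G} (hxy : x * y⁻¹ ∉ H) :
    ((φ (x, y)).1 = f x ∧ (φ (x, y)).2 = f y) ∨
      ((φ (x, y)).1 = f y ∧ (φ (x, y)).2 = f x) := by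
  have e1 := (hφ _ _).1 ((adj_three_iff (t := x) hxy).2 (Or.inl rfl))
  have e2 := (hφ _ _).1 ((adj_three_iff (t := y) hxy).2 (Or.inr rfl))
  have hxy1 : x ≠ y := fun e => hxy (by simp [e])
  have hne : (φ (x, y)).1 ≠ (φ (x, y)).2 := fun e => hxy1 (hs _ e)
  rw [h1] at e1 e2
  have hm := not_mem_of_adj_three hne e1
  exact pair_cases (fun e => hxy1 (hf e)) ((adj_three_iff hm).1 e1) ((adj_three_iff hm).1 e2)

omit hφ

/-! ### Multiplicativity from partial multiplicativity -/

/-- A map that respects products `k * h` (`k ∉ H`, `h ∈ H`), inverses outside `H`, and products of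
distinct elements outside `H`, is multiplicative as soon as `H` is nontrivial and proper. -/
lemma map_mul_of_partial {f : G → G} (hbot : H ≠ ⊥) (htop : H ≠ ⊤)
    (ha : ∀ k ∉ H, ∀ h ∈ H, f (k * h) = f k * f h)
    (hb : ∀ k ∉ H, f k⁻¹ = (f k)⁻¹)
    (hc : ∀ a ∉ H, ∀ b ∉ H, a ≠ b → f (a * b) = f a * f b) (a b : G) :
    f (a * b) = f a * f b := by
  obtain ⟨k₀, hk₀⟩ : ∃ k, k ∉ H := by
    by_contra! h; exact htop ((Subgroup.eq_top_iff' H).2 h)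
  obtain ⟨h₀, hh₀, hh₁⟩ := (Subgroup.ne_bot_iff_exists_ne_one (H := H)).1 hbot |>.elim
    fun h hh => (⟨h.1, h.2, fun e => hh (Subtype.ext e)⟩ : ∃ h ∈ H, h ≠ 1)
  have hinvK : ∀ k ∉ H, k⁻¹ ∉ H := fun k hk e => hk (by simpa using H.inv_mem e)
  have hKH : ∀ k ∉ H, ∀ h ∈ H, k * h ∉ H := fun k hk h hh e => hk ((H.mul_mem_cancel_right hh).1 e)
  have hHH : ∀ h ∈ H, ∀ h' ∈ H, f (h * h') = f h * f h' := by
    intro h hh h' hh'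
    have e1 := ha k₀ hk₀ _ (H.mul_mem hh hh')
    rw [← mul_assoc, ha _ (hKH _ hk₀ _ hh) _ hh', ha _ hk₀ _ hh, mul_assoc] at e1
    exact (mul_left_cancel e1).symm
  have hf1 : f 1 = 1 := by simpa using hHH 1 H.one_mem 1 H.one_mem
  have hinvH : ∀ h ∈ H, f h⁻¹ = (f h)⁻¹ := by
    intro h hh
    rw [eq_inv_iff_mul_eq_one, ← hHH _ (H.inv_mem hh) _ hh, inv_mul_cancel, hf1]
  by_cases hA : a ∈ H <;> by_cases hB : b ∈ H
  · exact hHH _ hA _ hB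
  · have e := ha _ (hinvK _ hB) _ (H.inv_mem hA)
    have e2 := hb _ (hKH _ (hinvK _ hB) _ (H.inv_mem hA))
    rw [e, hb _ hB, hinvH _ hA] at e2
    simpa using e2
  · exact ha _ hA _ hB
  · by_cases hab : a = b
    · subst hab
      -- `a * (a * h₀)` is a product of distinct elements, and also `(a * a) * h₀`.
      have e := hc a hA (a * h₀) (hKH _ hA _ hh₀) (by simpa using hh₁)
      have e2 : f (a * a * h₀) = f (a * a) * f h₀ := by
        by_cases hAA : a * a ∈ H
        · exact hHH _ hAA _ hh₀
        · exact ha _ hAA _ hh₀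
      rw [← mul_assoc, e2, ha _ hA _ hh₀, ← mul_assoc] at e
      exact mul_right_cancel e
    · exact hc _ hA _ hB hab

end Helpers

set_option maxHeartbeats 1600000 in
/-- Any graph automorphism of `Γ_H(G)` fixing `(e,e)` and fixing setwise
`C₁ = {(g,e) : g ≠ e}`, `C₂ = {(e,g) : g ≠ e}` and `C₃ = {(g,g) : g ≠ e}` is induced
by a group automorphism of `G` fixing `H` setwise. -/
theorem stmt_15 [Group G] [Fintype G] (hG : 5 ≤ Nat.card G) (H : Subgroup G)
    (hbot : H ≠ ⊥) (htop : H ≠ ⊤) (φ : Equiv.Perm (G × G))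
    (hφ : ∀ u v : G × G, gAdj H u v ↔ gAdj H (φ u) (φ v))
    (hfix : φ (1, 1) = (1, 1))
    (hC1 : φ '' {p : G × G | p.2 = 1 ∧ p.1 ≠ 1} = {p : G × G | p.2 = 1 ∧ p.1 ≠ 1})
    (hC2 : φ '' {p : G × G | p.1 = 1 ∧ p.2 ≠ 1} = {p : G × G | p.1 = 1 ∧ p.2 ≠ 1})
    (hC3 : φ '' {p : G × G | p.1 = p.2 ∧ p.1 ≠ 1} = {p : G × G | p.1 = p.2 ∧ p.1 ≠ 1}) :
    ∃ f : G ≃* G, (∀ x : G, x ∈ H ↔ f x ∈ H) ∧ ∀ x y : G, φ (x, y) = (f x, f y) := by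
  obtain ⟨k₀, hk₀⟩ : ∃ k, k ∉ H := by
    by_contra! h; exact htop ((Subgroup.eq_top_iff' H).2 h)
  obtain ⟨h₀, hh₀, hh₁⟩ := (Subgroup.ne_bot_iff_exists_ne_one (H := H)).1 hbot |>.elim
    fun h hh => (⟨h.1, h.2, fun e => hh (Subtype.ext e)⟩ : ∃ h ∈ H, h ≠ 1)
  have hinvK : ∀ k ∉ H, k⁻¹ ∉ H := fun k hk e => hk (by simpa using H.inv_mem e)
  -- `φ` preserves each of the three lines `C i ∪ {(1, 1)}`, in both directions.
  have key : ∀ C : Set (G × G), φ '' C = C → ∀ u, φ u ∈ C ↔ u ∈ C := by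
    intro C hC u
    conv_lhs => rw [← hC]
    exact φ.injective.mem_set_image
  have fix' : ∀ u, φ u = (1, 1) ↔ u = (1, 1) := fun u =>
    ⟨fun e => φ.injective (e.trans hfix.symm), fun e => e ▸ hfix⟩
  have s1 : ∀ u, (φ u).2 = 1 ↔ u.2 = 1 := by
    intro u
    have a := key _ hC1 u
    have b := fix' u
    simp only [Set.mem_ofPred_eq, Prod.ext_iff] at a b
    tauto
  have s2 : ∀ u, (φ u).1 = 1 ↔ u.1 = 1 := by
    intro u
    have a := key _ hC2 u
    have b := fix' u
    simp only [Set.mem_ofPred_eq, Prod.ext_iff] at a b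
    tauto
  have s3 : ∀ u, (φ u).1 = (φ u).2 ↔ u.1 = u.2 := by
    intro u
    have a := key _ hC3 u
    have b := fix' u
    simp only [Set.mem_ofPred_eq, Prod.ext_iff] at a b
    grind
  obtain ⟨f, hf⟩ : ∃ f : G → G, ∀ x, φ (x, 1) = (f x, 1) :=
    ⟨fun x => (φ (x, 1)).1, fun x => Prod.ext rfl ((s1 _).2 rfl)⟩
  obtain ⟨f₂, hf₂⟩ : ∃ f : G → G, ∀ x, φ (1, x) = (1, f x) :=
    ⟨fun x => (φ (1, x)).2, fun x => Prod.ext ((s2 _).2 rfl) rfl⟩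
  obtain ⟨f₃, hf₃⟩ : ∃ f : G → G, ∀ x, φ (x, x) = (f x, f x) :=
    ⟨fun x => (φ (x, x)).1, fun x => Prod.ext rfl ((s3 (x, x)).2 rfl).symm⟩
  have inj : Function.Injective f := fun a b e =>
    congrArg Prod.fst (φ.injective (by rw [hf, hf, e]) : (a, (1 : G)) = (b, 1))
  have inj₂ : Function.Injective f₂ := fun a b e =>
    congrArg Prod.snd (φ.injective (by rw [hf₂, hf₂, e]) : ((1 : G), a) = (1, b))
  have inj₃ : Function.Injective f₃ := fun a b e =>
    congrArg Prod.fst (φ.injective (by rw [hf₃, hf₃, e]) : (a, a) = (b, b))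
  have surj : Function.Surjective f := Finite.surjective_of_injective inj
  have f1 : f 1 = 1 := by simpa [hfix] using (congrArg Prod.fst (hf 1)).symm
  have f₂1 : f₂ 1 = 1 := by simpa [hfix] using (congrArg Prod.snd (hf₂ 1)).symm
  have R1 := fun {x y : G} => pair_one hφ inj hf (fun u => (s1 u).1) (x := x) (y := y)
  have R2 := fun {x y : G} => pair_two hφ inj₂ hf₂ (fun u => (s2 u).1) (x := x) (y := y)
  have R3 := fun {x y : G} => pair_three hφ inj₃ hf₃ (fun u => (s3 u).1) (x := x) (y := y)
  -- `x ∉ H` says that `(x, 1)` is adjacent to `(1, 1)`; likewise on the other lines.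
  have m1 : ∀ x, x ∈ H ↔ f x ∈ H := by
    intro x
    have := hφ (x, 1) (1, 1)
    rw [hfix, hf] at this
    simp only [gAdj, inS, ne_eq, Prod.mk.injEq] at this
    have a := not_mem_ne_one (H := H) (x := x)
    have b := not_mem_ne_one (H := H) (x := f x)
    simp at this
    grind
  have m2 : ∀ x, x ∈ H ↔ f₂ x ∈ H := by
    intro x
    have := hφ (1, x) (1, 1)
    rw [hfix, hf₂] at this
    simp only [gAdj, inS, ne_eq, Prod.mk.injEq] at this
    have a := not_mem_ne_one (H := H) (x := x)
    have b := not_mem_ne_one (H := H) (x := f₂ x)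
    simp at this
    grind
  have m3 : ∀ x, x ∈ H ↔ f₃ x ∈ H := by
    intro x
    have := hφ (x, x) (1, 1)
    rw [hfix, hf₃] at this
    simp only [gAdj, inS, ne_eq, Prod.mk.injEq] at this
    have a := not_mem_ne_one (H := H) (x := x)
    have b := not_mem_ne_one (H := H) (x := f₃ x)
    simp at this
    grind
  have e3K : ∀ k ∉ H, f₃ k = f k := by
    intro k hk
    have a := (R1 (x := k) hk).2
    have b : f k ≠ 1 := not_mem_ne_one (fun e => hk ((m1 k).2 e))
    simp only [hf₃, inv_mul_cancel, f1] at a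
    rcases a with a | a
    · exact a.1
    · exact absurd a.2.symm b
  have e2K : ∀ k ∉ H, f₂ k = f₃ k := by
    intro k hk
    have a := (R2 (y := k) hk).2
    have b : f₂ k ≠ 1 := not_mem_ne_one (fun e => hk ((m2 k).2 e))
    simp only [hf₃, inv_mul_cancel, f₂1] at a
    rcases a with a | a
    · exact a.1.symm
    · exact absurd a.2.symm b
  have invK : ∀ k ∉ H, f k⁻¹ = (f k)⁻¹ := by
    intro k hk
    have a := (R1 (x := 1) hk).2
    have b : f k⁻¹ ≠ 1 := not_mem_ne_one (fun e => hinvK _ hk ((m1 _).2 e))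
    simp only [hf₂, mul_one, f1, e2K _ hk, e3K _ hk] at a
    rcases a with a | a
    · exact a.2.symm
    · exact absurd a.1.symm b
  -- Vertices `(h, k)` and `(k, h)` with `h ∈ H` and `k ∉ H`.
  have hHK : ∀ x ∈ H, ∀ y ∉ H, f₃ x = f x ∧ φ (x, y) = (f x, f y) ∧
      f (y⁻¹ * x) = (f y)⁻¹ * f x := by
    intro x hx y hy
    have hxy : x * y⁻¹ ∉ H := fun e => hinvK _ hy ((H.mul_mem_cancel_left hx).1 e)
    have hyx : y⁻¹ * x ∉ H := fun e => hinvK _ hy ((H.mul_mem_cancel_right hx).1 e)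
    obtain ⟨p, a⟩ := R1 (x := x) hy
    have c := R3 hxy
    have n1 := m3 x
    have n2 := m1 (y⁻¹ * x)
    have d := e3K y hy
    have c' : (φ (x, y)).1 = f₃ x ∧ (φ (x, y)).2 = f₃ y := by grind
    rw [c'.1, c'.2, d] at a
    have a' : f₃ x = f x ∧ (f y)⁻¹ * f₃ x = f (y⁻¹ * x) := by grind
    refine ⟨a'.1, Prod.ext (c'.1.trans a'.1) (c'.2.trans d), ?_⟩
    rw [← a'.2, a'.1]
  have e3 : ∀ x, f₃ x = f x := fun x => by
    by_cases hx : x ∈ H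
    · exact (hHK x hx k₀ hk₀).1
    · exact e3K x hx
  have hKH : ∀ x ∉ H, ∀ y ∈ H, f₂ y = f y ∧ φ (x, y) = (f x, f y) := by
    intro x hx y hy
    have hxy : x * y⁻¹ ∉ H := fun e => hx ((H.mul_mem_cancel_right (H.inv_mem hy)).1 e)
    have hyx : x⁻¹ * y ∉ H := fun e => hinvK _ hx ((H.mul_mem_cancel_right hy).1 e)
    obtain ⟨p, a⟩ := R2 (y := y) hx
    have c := R3 hxy
    have n1 := m1 y
    have n2 := m2 (x⁻¹ * y)
    simp only [e3] at c
    have c' : (φ (x, y)).1 = f x ∧ (φ (x, y)).2 = f y := by grind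
    rw [c'.1, c'.2] at a
    exact ⟨by grind, Prod.ext c'.1 c'.2⟩
  have e2 : ∀ x, f₂ x = f x := fun x => by
    by_cases hx : x ∈ H
    · exact (hKH k₀ hk₀ x hx).1
    · exact (e2K x hx).trans (e3K x hx)
  simp only [e2] at R2
  -- Vertices `(x, y)` with `x, y ∉ H`, away from the antidiagonal.
  have hKK : ∀ x ∉ H, ∀ y ∉ H, x ≠ y → x ≠ y⁻¹ → φ (x, y) = (f x, f y) ∧
      f (y⁻¹ * x) = (f y)⁻¹ * f x := by
    intro x hx y hy hxy hxy'
    obtain ⟨-, a⟩ := R1 (x := x) hy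
    obtain ⟨-, b⟩ := R2 (y := y) hx
    have iy := invK y hy
    have ix := invK x hx
    rcases a with ⟨a1, a2⟩ | ⟨a1, a2⟩ <;> rcases b with ⟨b1, b2⟩ | ⟨b1, b2⟩
    · exact ⟨Prod.ext a1 b1, by rw [← a2, a1, b1]⟩
    · exfalso
      have : f (y⁻¹ * x) = f y⁻¹ := by rw [iy, ← a2, ← b2]; group
      exact not_mem_ne_one hx (by simpa using inj this)
    · exfalso
      have : f (x⁻¹ * y) = f x⁻¹ := by rw [ix, ← a2, ← b2]; group
      exact not_mem_ne_one hy (by simpa using inj this)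
    · exfalso
      have : f x = f y⁻¹ := by rw [iy, ← a2, ← b2]; group
      exact hxy' (inj this)
  have hmul : ∀ a b, f (a * b) = f a * f b := by
    refine map_mul_of_partial hbot htop ?_ invK ?_
    · intro k hk h hh
      have := (hHK h hh _ (hinvK k hk)).2.2
      rwa [invK _ hk, inv_inv, inv_inv] at this
    · intro a ha b hb hab
      by_cases h : b = a⁻¹
      · rw [h, invK _ ha, mul_inv_cancel, mul_inv_cancel, f1]
      · have := (hKK b hb _ (hinvK a ha) h (by simpa using hab.symm)).2
        rwa [invK _ ha, inv_inv, inv_inv] at this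
  let F : G ≃* G := MulEquiv.mk' (Equiv.ofBijective f ⟨inj, surj⟩) hmul
  have hF : ∀ x, F x = f x := fun _ => rfl
  -- An isomorphism preserving `H` transports adjacency.
  have hadj : ∀ a b c d, gAdj H (f a, f b) (f c, f d) ↔ gAdj H (a, b) (c, d) := by
    intro a b c d
    have q : ∀ x y, f x * (f y)⁻¹ = f (x * y⁻¹) := fun x y => by
      simp only [← hF, map_mul, map_inv]
    have f1' : ∀ x, f x = 1 ↔ x = 1 := fun x => by rw [← inj.eq_iff (a := x), f1]
    simp only [gAdj, inS, ne_eq, Prod.mk.injEq, q, f1', inj.eq_iff, ← m1]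
  have anti : ∀ x ∉ H, φ (x, x⁻¹) = (f x, f x⁻¹) := by
    intro x hx
    by_cases hxx : x = x⁻¹
    · rw [← hxx, hf₃, e3]
    obtain ⟨-, a⟩ := R1 (x := x) (hinvK _ hx)
    obtain ⟨-, b⟩ := R2 (y := x⁻¹) hx
    have iv : ∀ x, f x⁻¹ = (f x)⁻¹ := fun x => map_inv F x
    simp only [inv_inv, hmul, iv] at a b
    rcases a with ⟨a1, a2⟩ | ⟨a1, a2⟩
    · refine Prod.ext a1 ?_
      rw [a1] at a2
      simp only [iv]
      exact inv_injective (by simpa using a2)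
    · exfalso
      -- In the remaining case `x ^ 3 = 1` and `φ` swaps `(x, x⁻¹)` and `(x⁻¹, x)`.
      have h2 : (φ (x, x⁻¹)).2 = (f x)⁻¹ * (f x)⁻¹ := by
        rcases b with ⟨b1, b2⟩ | ⟨b1, b2⟩
        · exfalso
          rw [b1, a1] at a2
          have : f (x * x) = f 1 := by
            rw [hmul, f1]
            simpa [mul_assoc] using a2
          exact hxx (eq_inv_of_mul_eq_one_left (inj this))
        · exact b1
      have h3 : f (x * x) = f x⁻¹ := by
        rw [hmul, iv, eq_inv_iff_mul_eq_one]
        rw [h2, a1] at a2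
        simpa [mul_assoc] using a2
      have h4 := inj h3
      have hsw : φ (x, x⁻¹) = (f x⁻¹, f x) := by
        refine Prod.ext (by rw [a1, ← h3, hmul]) ?_
        rw [h2, ← mul_inv_rev, ← hmul, h3, iv, inv_inv]
      have hadj1 : gAdj H (x, h₀) (x, x⁻¹) := by
        have : h₀ * x ∉ H := fun e => hx ((H.mul_mem_cancel_left hh₀).1 e)
        refine ⟨fun e => hinvK _ hx (mem_of_eq (Prod.ext_iff.1 e).2.symm hh₀), Or.inr (Or.inl ?_)⟩
        simpa using this
      rw [hφ, hsw, (hKH x hx h₀ hh₀).2, hadj] at hadj1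
      rcases hadj1.2 with h | h | h
      · exact hx (mem_of_eq (mul_inv_eq_one.1 h.2).symm hh₀)
      · exact hxx (mul_inv_eq_one.1 h.1)
      · have h5 := h.1
        simp only [inv_inv, h4] at h5
        exact hh₁ (by simpa using h5)
  have main : ∀ x y, ¬ (x ∈ H ∧ y ∈ H) → φ (x, y) = (f x, f y) := by
    intro x y h
    by_cases hx : x ∈ H <;> by_cases hy : y ∈ H
    · exact absurd ⟨hx, hy⟩ h
    · exact (hHK x hx y hy).2.1
    · exact (hKH x hx y hy).2
    · by_cases h1 : x = y
      · rw [h1, hf₃, e3]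
      by_cases h2 : x = y⁻¹
      · have := anti x hx
        rwa [show x⁻¹ = y by rw [h2, inv_inv]] at this
      · exact (hKK x hx y hy h1 h2).1
  refine ⟨F, m1, fun x y => ?_⟩
  simp only [hF]
  by_cases hxy : x ∈ H ∧ y ∈ H
  swap
  · exact main x y hxy
  obtain ⟨hx, hy⟩ := hxy
  obtain ⟨x', hx'⟩ := surj (φ (x, y)).1
  obtain ⟨y', hy'⟩ := surj (φ (x, y)).2
  have hp : φ (x, y) = (f x', f y') := Prod.ext hx'.symm hy'.symm
  have hH : x' ∈ H ∧ y' ∈ H := by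
    by_contra h
    -- `main` would give a second preimage, outside `H × H`, of the same vertex.
    have e := φ.injective (hp.trans (main x' y' h).symm)
    simp only [Prod.mk.injEq] at e
    exact h ⟨e.1 ▸ hx, e.2 ▸ hy⟩
  have a1 : gAdj H (k₀, y) (x, y) :=
    ⟨fun e => hk₀ (mem_of_eq (Prod.ext_iff.1 e).1 hx), Or.inl
      ⟨fun e => hk₀ ((H.mul_mem_cancel_right (H.inv_mem hx)).1 e), mul_inv_cancel y⟩⟩
  have a2 : gAdj H (x, k₀) (x, y) :=
    ⟨fun e => hk₀ (mem_of_eq (Prod.ext_iff.1 e).2 hy), Or.inr (Or.inl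
      ⟨mul_inv_cancel x, fun e => hk₀ ((H.mul_mem_cancel_right (H.inv_mem hy)).1 e)⟩)⟩
  rw [hφ, hp, main _ _ (fun h => hk₀ h.1), hadj] at a1
  rw [hφ, hp, main _ _ (fun h => hk₀ h.2), hadj] at a2
  have ey : y' = y := by
    rcases a1.2 with h | h | h
    · exact (mul_inv_eq_one.1 h.2).symm
    · exact absurd (mem_of_eq (mul_inv_eq_one.1 h.1) hH.1) hk₀
    · exact absurd (h.1 ▸ H.mul_mem hy (H.inv_mem hH.2)) h.2
  have ex : x' = x := by
    rcases a2.2 with h | h | h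
    · exact absurd (mem_of_eq (mul_inv_eq_one.1 h.2) hH.2) hk₀
    · exact (mul_inv_eq_one.1 h.1).symm
    · exact absurd (H.mul_mem hx (H.inv_mem hH.1)) h.2
  rw [hp, ex, ey]
end
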